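/- Let f : ℝ → ℝ be C² with f and f' bounded and f ∈ L¹(ℝ), and let K(x) = -log|tanh x|. Then for every x ∈ ℝ, the convolution K * f is twice differentiable at x and (K*f)''(x) = ∫_ℝ [f(x+z) - f(x) - z f'(x)] K''(z) dz, where the integrand is integrable since |f(x+z) - f(x) - zf'(x)| ≤ C z² near z = 0 and K''(z) ≤ C/z². -/

import Mathlib

/-!
Two differentiations of `K * f` alternate with two integrations by parts. As `K'` and `K''` are not
integrable at the origin, the antiderivative is normalised each time to vanish at `z = 0` to the
order of the singularity:
`(K * f)'(t) = ∫ K(z) f'(t + z) dz = -∫ K'(z) (f(t + z) - f(t)) dz`, and then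
`(K * f)''(x) = -∫ K'(z) (f'(x + z) - f'(x)) dz = ∫ K''(z) (f(x + z) - f(x) - z f'(x)) dz`.
The boundary terms at `0` disappear, and the integrands are dominated by the integrable functions
`K`, `z K`, `z K'` and `z² K''`.
-/

open MeasureTheory

noncomputable def Kfun (x : ℝ) : ℝ := -Real.log |Real.tanh x|

open Filter Topology Set
open scoped NNReal

section Domination

variable {E : Type*} [NormedAddCommGroup E] [NormedSpace ℝ E] {α : Type*} {p g : α → ℝ} {v : α → E}
  {C : ℝ}

theorem norm_smul_le_mul_norm_mul (hv : ∀ z, ‖v z‖ ≤ C * ‖p z‖) (z : α) :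
    ‖g z • v z‖ ≤ C * ‖p z * g z‖ :=
  calc ‖g z • v z‖ = ‖g z‖ * ‖v z‖ := norm_smul _ _
    _ ≤ ‖g z‖ * (C * ‖p z‖) := by gcongr; exact hv z
    _ = C * ‖p z * g z‖ := by rw [norm_mul]; ring

theorem integrable_smul_of_norm_le [MeasurableSpace α] {μ : Measure α}
    (hpg : Integrable (fun z => p z * g z) μ) (hg : AEStronglyMeasurable g μ)
    (hv : AEStronglyMeasurable v μ) (hvp : ∀ z, ‖v z‖ ≤ C * ‖p z‖) :
    Integrable (fun z => g z • v z) μ :=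
  (hpg.norm.const_mul C).mono' (hg.smul hv) (ae_of_all _ (norm_smul_le_mul_norm_mul hvp))

theorem continuousAt_smul_of_norm_le [TopologicalSpace α] {a : α}
    (hpg : ContinuousAt (fun z => p z * g z) a) (ha : p a = 0) (hvp : ∀ z, ‖v z‖ ≤ C * ‖p z‖) :
    ContinuousAt (fun z => g z • v z) a := by
  have hva : v a = 0 := by simpa [ha] using hvp a
  have hbound : Tendsto (fun z => C * ‖p z * g z‖) (𝓝 a) (𝓝 0) := by
    simpa [ha] using (hpg.norm.const_mul C).tendsto
  simpa only [ContinuousAt, hva, smul_zero] using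
    squeeze_zero_norm (norm_smul_le_mul_norm_mul hvp) hbound

end Domination

section IntegrationByParts

variable {E : Type*} [NormedAddCommGroup E] [NormedSpace ℝ E] [CompleteSpace E] {a : ℝ}

theorem integral_eq_zero_of_hasDerivAt_of_ne {F F' : ℝ → E} (hcont : ContinuousAt F a)
    (hderiv : ∀ z ≠ a, HasDerivAt F (F' z) z) (hF' : Integrable F') (hF : Integrable F) :
    ∫ z, F' z = 0 := by
  have hright : ∀ z ∈ Ioi a, HasDerivAt F (F' z) z := fun z hz => hderiv z (ne_of_gt hz)
  have hleft : ∀ z ∈ Iio a, HasDerivAt F (F' z) z := fun z hz => hderiv z (ne_of_lt hz)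
  have htop : Tendsto F atTop (𝓝 0) :=
    tendsto_zero_of_hasDerivAt_of_integrableOn_Ioi hright hF'.integrableOn hF.integrableOn
  have hbot : Tendsto F atBot (𝓝 0) :=
    tendsto_zero_of_hasDerivAt_of_integrableOn_Iic (a := a - 1)
      (fun z hz => hleft z (lt_of_le_of_lt hz (sub_one_lt a))) hF'.integrableOn hF.integrableOn
  rw [← intervalIntegral.integral_Iic_add_Ioi hF'.integrableOn hF'.integrableOn,
    integral_Iic_of_hasDerivAt_of_tendsto hcont.continuousWithinAt hleft hF'.integrableOn hbot,
    integral_Ioi_of_hasDerivAt_of_tendsto hcont.continuousWithinAt hright hF'.integrableOn htop]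
  abel

theorem integral_smul_deriv_eq_neg_of_hasDerivAt_of_ne {u u' : ℝ → ℝ} {v v' : ℝ → E}
    (hu : ∀ z ≠ a, HasDerivAt u (u' z) z) (hv : ∀ z ≠ a, HasDerivAt v (v' z) z)
    (hcont : ContinuousAt (fun z => u z • v z) a) (huv : Integrable fun z => u z • v z)
    (huv' : Integrable fun z => u z • v' z) (hu'v : Integrable fun z => u' z • v z) :
    ∫ z, u z • v' z = -∫ z, u' z • v z := by
  rw [eq_neg_iff_add_eq_zero, ← integral_add huv' hu'v]
  exact integral_eq_zero_of_hasDerivAt_of_ne hcont (fun z hz => (hu z hz).smul (hv z hz))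
    (huv'.add hu'v) huv

end IntegrationByParts

theorem exists_eventually_dist_le_mul_dist {X Y : Type*} [PseudoMetricSpace X]
    [PseudoMetricSpace Y] {g : X → Y} (hg : LocallyLipschitz g)
    (hbdd : Bornology.IsBounded (range g)) (x : X) :
    ∃ C : ℝ≥0, ∀ᶠ t in 𝓝 x, ∀ y, dist (g y) (g t) ≤ C * dist y t := by
  obtain ⟨L, s, hs, hLip⟩ := hg x
  obtain ⟨r, hr, hrs⟩ := Metric.mem_nhds_iff.1 hs
  obtain ⟨D, hD⟩ := Metric.isBounded_range_iff.1 hbdd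
  refine ⟨L + (D / (r / 2)).toNNReal, ?_⟩
  filter_upwards [Metric.ball_mem_nhds x (half_pos hr)] with t ht y
  rw [Metric.mem_ball] at ht
  simp only [NNReal.coe_add, add_mul]
  rcases lt_or_ge (dist y t) (r / 2) with hyt | hyt
  · have hy : y ∈ s := hrs (by rw [Metric.mem_ball]; linarith [dist_triangle y t x])
    have ht' : t ∈ s := hrs (by rw [Metric.mem_ball]; linarith)
    exact (hLip.dist_le_mul y hy t ht').trans (le_add_of_nonneg_right (by positivity))
  · calc dist (g y) (g t) ≤ D := hD y t
      _ = D / (r / 2) * (r / 2) := by field_simp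
      _ ≤ (D / (r / 2)).toNNReal * dist y t := by gcongr; exact Real.le_coe_toNNReal _
      _ ≤ L * dist y t + (D / (r / 2)).toNNReal * dist y t :=
        le_add_of_nonneg_left (by positivity)

section TaylorRemainder

variable {E : Type*} [NormedAddCommGroup E] [NormedSpace ℝ E] {f : ℝ → E}

theorem hasDerivAt_sub_sub_smul_deriv (hf : Differentiable ℝ f) (x z : ℝ) :
    HasDerivAt (fun z => f (x + z) - f x - z • deriv f x) (deriv f (x + z) - deriv f x) z := by
  simpa using (((hf (x + z)).hasDerivAt.comp_const_add x z).sub_const (f x)).fun_sub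
    ((hasDerivAt_id z).smul_const (deriv f x))

theorem norm_sub_sub_smul_deriv_le {x C : ℝ} (hf : Differentiable ℝ f)
    (hf' : ∀ z, ‖deriv f (x + z) - deriv f x‖ ≤ C * ‖z‖) (z : ℝ) :
    ‖f (x + z) - f x - z • deriv f x‖ ≤ C * ‖z ^ 2‖ := by
  have hC : 0 ≤ C := by simpa using (norm_nonneg _).trans (hf' 1)
  have hbound : ∀ y ∈ Metric.closedBall (0 : ℝ) ‖z‖,
      ‖deriv f (x + y) - deriv f x‖ ≤ C * ‖z‖ := fun y hy =>
    (hf' y).trans (by gcongr; exact mem_closedBall_zero_iff.1 hy)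
  have hmvt := (convex_closedBall (0 : ℝ) ‖z‖).norm_image_sub_le_of_norm_hasDerivWithin_le
    (fun y _ => (hasDerivAt_sub_sub_smul_deriv hf x y).hasDerivWithinAt) hbound (x := 0) (y := z)
    (by simp) (by simp)
  simpa [pow_two, mul_assoc] using hmvt

end TaylorRemainder

/-- An integrable kernel on the line, twice differentiable off the origin, whose second derivative
becomes integrable after multiplication by `z ^ 2`, like the density of a Lévy measure. This is the
class of kernels whose convolutions have a second derivative given by integrating the Taylor
remainder `f (x + z) - f x - z • deriv f x` against `deriv (deriv k)`. The last two fields encode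
`z k(z) → 0` and `z² k'(z) → 0` as `z → 0`: both products vanish at `0` whatever the values of `k`
and `deriv k` there. -/
structure IsSingularPotential (k : ℝ → ℝ) : Prop where
  differentiableAt : ∀ z ≠ 0, DifferentiableAt ℝ k z
  differentiableAt_deriv : ∀ z ≠ 0, DifferentiableAt ℝ (deriv k) z
  integrable : Integrable k
  integrable_mul : Integrable fun z => z * k z
  integrable_mul_deriv : Integrable fun z => z * deriv k z
  integrable_sq_mul_deriv_deriv : Integrable fun z => z ^ 2 * deriv (deriv k) z
  continuousAt_mul : ContinuousAt (fun z => z * k z) 0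
  continuousAt_sq_mul_deriv : ContinuousAt (fun z => z ^ 2 * deriv k z) 0

namespace IsSingularPotential

variable {E : Type*} [NormedAddCommGroup E] [NormedSpace ℝ E] {k : ℝ → ℝ} {f : ℝ → E}
  {M : ℝ≥0} {x C : ℝ}

theorem integrable_smul_sub (hk : IsSingularPotential k) (hM : LipschitzWith M f) (t : ℝ) :
    Integrable fun z => k z • (f (t + z) - f t) :=
  integrable_smul_of_norm_le hk.integrable_mul hk.integrable.aestronglyMeasurable
    (by have := hM.continuous; fun_prop) fun z => by simpa using hM.norm_sub_le (t + z) t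

theorem integrable_smul (hk : IsSingularPotential k) (hM : LipschitzWith M f) (t : ℝ) :
    Integrable fun z => k z • f (t + z) := by
  simpa [smul_sub, Pi.add_def] using
    (hk.integrable_smul_sub hM t).add (hk.integrable.smul_const (f t))

theorem integrable_deriv_smul_sub (hk : IsSingularPotential k) (hM : LipschitzWith M f) (t : ℝ) :
    Integrable fun z => deriv k z • (f (t + z) - f t) :=
  integrable_smul_of_norm_le hk.integrable_mul_deriv (measurable_deriv k).aestronglyMeasurable
    (by have := hM.continuous; fun_prop) fun z => by simpa using hM.norm_sub_le (t + z) t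

theorem integrable_deriv_smul_remainder (hk : IsSingularPotential k) (hM : LipschitzWith M f)
    (x : ℝ) : Integrable fun z => deriv k z • (f (x + z) - f x - z • deriv f x) := by
  simpa [smul_sub, smul_smul, mul_comm, Pi.sub_def] using
    (hk.integrable_deriv_smul_sub hM x).sub (hk.integrable_mul_deriv.smul_const (deriv f x))

theorem integrable_deriv_deriv_smul_remainder (hk : IsSingularPotential k)
    (hf : Differentiable ℝ f) (hf' : ∀ z, ‖deriv f (x + z) - deriv f x‖ ≤ C * ‖z‖) :
    Integrable fun z => deriv (deriv k) z • (f (x + z) - f x - z • deriv f x) :=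
  integrable_smul_of_norm_le hk.integrable_sq_mul_deriv_deriv
    (measurable_deriv _).aestronglyMeasurable (by have := hf.continuous; fun_prop)
    (norm_sub_sub_smul_deriv_le hf hf')

variable [CompleteSpace E]

theorem integrable_smul_deriv (hk : IsSingularPotential k) (hM : LipschitzWith M f) (t : ℝ) :
    Integrable fun z => k z • deriv f (t + z) :=
  integrable_smul_of_norm_le (p := 1) (by simpa using hk.integrable)
    hk.integrable.aestronglyMeasurable
    ((stronglyMeasurable_deriv f).comp_measurable (measurable_const_add t)).aestronglyMeasurable
    fun z => by simpa using norm_deriv_le_of_lipschitz hM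

theorem integrable_deriv_smul_deriv_sub (hk : IsSingularPotential k)
    (hf' : ∀ z, ‖deriv f (x + z) - deriv f x‖ ≤ C * ‖z‖) :
    Integrable fun z => deriv k z • (deriv f (x + z) - deriv f x) :=
  integrable_smul_of_norm_le hk.integrable_mul_deriv (measurable_deriv k).aestronglyMeasurable
    (((stronglyMeasurable_deriv f).comp_measurable (measurable_const_add x)).sub
      stronglyMeasurable_const).aestronglyMeasurable hf'

theorem hasDerivAt_integral_smul (hk : IsSingularPotential k) (hf : Differentiable ℝ f)
    (hM : LipschitzWith M f) (t : ℝ) :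
    HasDerivAt (fun t => ∫ z, k z • f (t + z)) (∫ z, k z • deriv f (t + z)) t := by
  refine (hasDerivAt_integral_of_dominated_loc_of_deriv_le
    (F' := fun s z => k z • deriv f (s + z)) (bound := fun z => ‖k z‖ * M) univ_mem
    (.of_forall fun s => (hk.integrable_smul hM s).aestronglyMeasurable) (hk.integrable_smul hM t)
    (hk.integrable_smul_deriv hM t).aestronglyMeasurable (.of_forall fun z s _ => ?_)
    (hk.integrable.norm.mul_const _) (.of_forall fun z s _ => ?_)).2
  · rw [norm_smul]
    gcongr
    exact norm_deriv_le_of_lipschitz hM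
  · exact ((hf (s + z)).hasDerivAt.comp_add_const s z).const_smul (k z)

theorem integral_smul_deriv (hk : IsSingularPotential k) (hf : Differentiable ℝ f)
    (hM : LipschitzWith M f) (t : ℝ) :
    ∫ z, k z • deriv f (t + z) = -∫ z, deriv k z • (f (t + z) - f t) :=
  integral_smul_deriv_eq_neg_of_hasDerivAt_of_ne (fun z hz => (hk.differentiableAt z hz).hasDerivAt)
    (fun z _ => ((hf (t + z)).hasDerivAt.comp_const_add t z).sub_const (f t))
    (continuousAt_smul_of_norm_le hk.continuousAt_mul rfl
      fun z => by simpa using hM.norm_sub_le (t + z) t)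
    (hk.integrable_smul_sub hM t) (hk.integrable_smul_deriv hM t)
    (hk.integrable_deriv_smul_sub hM t)

theorem hasDerivAt_integral_deriv_smul_sub (hk : IsSingularPotential k) (hf : Differentiable ℝ f)
    (hM : LipschitzWith M f)
    (hf' : ∀ᶠ t in 𝓝 x, ∀ z, ‖deriv f (t + z) - deriv f t‖ ≤ C * ‖z‖) :
    HasDerivAt (fun t => ∫ z, deriv k z • (f (t + z) - f t))
      (∫ z, deriv k z • (deriv f (x + z) - deriv f x)) x :=
  (hasDerivAt_integral_of_dominated_loc_of_deriv_le
    (F' := fun s z => deriv k z • (deriv f (s + z) - deriv f s))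
    (bound := fun z => C * ‖z * deriv k z‖) hf'
    (.of_forall fun s => (hk.integrable_deriv_smul_sub hM s).aestronglyMeasurable)
    (hk.integrable_deriv_smul_sub hM x)
    (hk.integrable_deriv_smul_deriv_sub hf'.self_of_nhds).aestronglyMeasurable
    (.of_forall fun z _ hs => norm_smul_le_mul_norm_mul hs z)
    (hk.integrable_mul_deriv.norm.const_mul C)
    (.of_forall fun z s _ => (((hf (s + z)).hasDerivAt.comp_add_const s z).sub
      (hf s).hasDerivAt).const_smul (deriv k z))).2

theorem integral_deriv_smul_deriv_sub (hk : IsSingularPotential k) (hf : Differentiable ℝ f)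
    (hM : LipschitzWith M f)
    (hf' : ∀ᶠ t in 𝓝 x, ∀ z, ‖deriv f (t + z) - deriv f t‖ ≤ C * ‖z‖) :
    ∫ z, deriv k z • (deriv f (x + z) - deriv f x) =
      -∫ z, deriv (deriv k) z • (f (x + z) - f x - z • deriv f x) :=
  integral_smul_deriv_eq_neg_of_hasDerivAt_of_ne
    (fun z hz => (hk.differentiableAt_deriv z hz).hasDerivAt)
    (fun z _ => hasDerivAt_sub_sub_smul_deriv hf x z)
    (continuousAt_smul_of_norm_le hk.continuousAt_sq_mul_deriv (by simp)
      (norm_sub_sub_smul_deriv_le hf hf'.self_of_nhds))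
    (hk.integrable_deriv_smul_remainder hM x)
    (hk.integrable_deriv_smul_deriv_sub hf'.self_of_nhds)
    (hk.integrable_deriv_deriv_smul_remainder hf hf'.self_of_nhds)

end IsSingularPotential

theorem integral_comp_sub_left_smul_of_even {G E : Type*} [AddCommGroup G] [MeasurableSpace G]
    [MeasurableAdd G] {μ : Measure G} [μ.IsAddLeftInvariant] [NormedAddCommGroup E]
    [NormedSpace ℝ E] {k : G → ℝ} (hk : k.Even) (f : G → E) (t : G) :
    ∫ z, k (t - z) • f z ∂μ = ∫ z, k z • f (t + z) ∂μ := by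
  rw [← integral_add_left_eq_self (fun z => k (t - z) • f z) t]
  simp only [sub_add_cancel_left, hk _]

theorem integrable_comp_abs {E : Type*} [NormedAddCommGroup E] {g : ℝ → E}
    (hg : IntegrableOn g (Ioi 0)) : Integrable fun z => g |z| := by
  have hpos : IntegrableOn (fun z => g |z|) (Ioi 0) :=
    hg.congr_fun (fun z hz => by rw [abs_of_pos hz]) measurableSet_Ioi
  have hneg : IntegrableOn (fun z => g |z|) (Iio 0) := by
    simpa only [abs_neg] using
      IntegrableOn.comp_neg_Iio (c := (0 : ℝ)) (f := fun z => g |z|) (by rwa [neg_zero])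
  rw [← integrableOn_univ, ← Iio_union_Ici (a := (0 : ℝ)), integrableOn_union,
    integrableOn_Ici_iff_integrableOn_Ioi]
  exact ⟨hneg, hpos⟩

theorem integrable_abs_rpow_mul_exp_neg_mul_abs {s b : ℝ} (hs : -1 < s) (hb : 0 < b) :
    Integrable fun z : ℝ => |z| ^ s * Real.exp (-b * |z|) :=
  integrable_comp_abs (g := fun z => z ^ s * Real.exp (-b * z)) <| by
    simpa using integrableOn_rpow_mul_exp_neg_mul_rpow hs one_pos hb

theorem log_one_add_le_two_mul_sqrt {q : ℝ} (hq : 0 ≤ q) : Real.log (1 + q) ≤ 2 * √q := by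
  have hsq : 1 + q ≤ (1 + √q) ^ 2 := by nlinarith [Real.sq_sqrt hq, Real.sqrt_nonneg q]
  calc Real.log (1 + q) ≤ Real.log ((1 + √q) ^ 2) := Real.log_le_log (by linarith) hsq
    _ = 2 * Real.log (1 + √q) := by rw [Real.log_pow]; norm_num
    _ ≤ 2 * √q := by linarith [Real.log_le_sub_one_of_pos (show 0 < 1 + √q by positivity)]

theorem mul_exp_le_sinh_two_mul {r : ℝ} (hr : 0 ≤ r) : r * Real.exp r ≤ Real.sinh (2 * r) := by
  have hsinh : r ≤ Real.sinh r := Real.self_le_sinh_iff.2 hr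
  have hcosh : Real.exp r ≤ 2 * Real.cosh r := by
    rw [Real.cosh_eq]
    linarith [Real.exp_pos (-r)]
  calc r * Real.exp r ≤ Real.sinh r * (2 * Real.cosh r) := by gcongr
    _ = Real.sinh (2 * r) := by rw [Real.sinh_two_mul]; ring

section Kfun

variable {z : ℝ}

theorem even_Kfun : Kfun.Even := fun z => by simp [Kfun]

theorem Kfun_eq_log_cosh_sub_log_sinh (hz : z ≠ 0) :
    Kfun z = Real.log (Real.cosh z) - Real.log (Real.sinh z) := by
  rw [Kfun, Real.log_abs, Real.tanh_eq_sinh_div_cosh,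
    Real.log_div (Real.sinh_ne_zero.2 hz) (Real.cosh_pos z).ne', neg_sub]

theorem hasDerivAt_Kfun (hz : z ≠ 0) : HasDerivAt Kfun (-2 / Real.sinh (2 * z)) z := by
  have hsinh : Real.sinh z ≠ 0 := Real.sinh_ne_zero.2 hz
  have hcosh : Real.cosh z ≠ 0 := (Real.cosh_pos z).ne'
  have heq : Kfun =ᶠ[𝓝 z] fun y => Real.log (Real.cosh y) - Real.log (Real.sinh y) := by
    filter_upwards [eventually_ne_nhds hz] with y hy using Kfun_eq_log_cosh_sub_log_sinh hy
  refine HasDerivAt.congr_of_eventuallyEq ?_ heq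
  convert ((Real.hasDerivAt_cosh z).log hcosh).fun_sub ((Real.hasDerivAt_sinh z).log hsinh) using 1
  rw [Real.sinh_two_mul]
  field_simp
  linarith [Real.cosh_sq z]

theorem deriv_Kfun (hz : z ≠ 0) : deriv Kfun z = -2 / Real.sinh (2 * z) :=
  (hasDerivAt_Kfun hz).deriv

theorem hasDerivAt_deriv_Kfun (hz : z ≠ 0) :
    HasDerivAt (deriv Kfun) (4 * Real.cosh (2 * z) / Real.sinh (2 * z) ^ 2) z := by
  have hsinh : Real.sinh (2 * z) ≠ 0 := Real.sinh_ne_zero.2 (by simpa using hz)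
  have heq : deriv Kfun =ᶠ[𝓝 z] fun y => -2 / Real.sinh (2 * y) := by
    filter_upwards [eventually_ne_nhds hz] with y hy using deriv_Kfun hy
  have hdouble : HasDerivAt (fun y : ℝ => 2 * y) 2 z := by
    simpa using (hasDerivAt_id z).const_mul 2
  refine HasDerivAt.congr_of_eventuallyEq ?_ heq
  exact ((hasDerivAt_const z (-2)).fun_div hdouble.sinh hsinh).congr_deriv (by ring)

theorem abs_Kfun_le (z : ℝ) :
    |Kfun z| ≤ 2 * (|z| ^ (-(1 / 2) : ℝ) * Real.exp (-(1 / 2) * |z|)) := by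
  rcases eq_or_ne z 0 with rfl | hz
  · simp [Kfun]
  have hr : 0 < |z| := abs_pos.2 hz
  have hsinh : |z| ≤ Real.sinh |z| := Real.self_le_sinh_iff.2 hr.le
  have hlog : Kfun z = Real.log (1 + Real.exp (-|z|) / Real.sinh |z|) := by
    have habs : Kfun z = Kfun |z| := by rcases abs_choice z with h | h <;> simp [h, even_Kfun z]
    have hpos : 0 < Real.sinh |z| := hr.trans_le hsinh
    rw [habs, Kfun_eq_log_cosh_sub_log_sinh hr.ne', ← Real.cosh_sub_sinh, sub_div,
      div_self hpos.ne', add_sub_cancel, Real.log_div (Real.cosh_pos _).ne' hpos.ne']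
  have hnonneg : 0 ≤ Kfun z := by
    rw [hlog]
    exact Real.log_nonneg (le_add_of_nonneg_right (by positivity))
  calc |Kfun z| = Real.log (1 + Real.exp (-|z|) / Real.sinh |z|) := by
        rw [abs_of_nonneg hnonneg, hlog]
    _ ≤ 2 * √(Real.exp (-|z|) / Real.sinh |z|) := log_one_add_le_two_mul_sqrt (by positivity)
    _ ≤ 2 * √(Real.exp (-|z|) / |z|) := by gcongr
    _ = 2 * (|z| ^ (-(1 / 2) : ℝ) * Real.exp (-(1 / 2) * |z|)) := by
        rw [Real.sqrt_div (Real.exp_pos _).le, ← Real.exp_half, Real.sqrt_eq_rpow,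
          Real.rpow_neg hr.le, div_eq_inv_mul]
        ring_nf

theorem abs_mul_Kfun_le (z : ℝ) :
    |z * Kfun z| ≤ 2 * (|z| ^ (1 / 2 : ℝ) * Real.exp (-(1 / 2) * |z|)) := by
  rcases eq_or_ne z 0 with rfl | hz
  · simp
  have hrpow : |z| * |z| ^ (-(1 / 2) : ℝ) = |z| ^ (1 / 2 : ℝ) := by
    rw [← Real.rpow_one_add' (abs_nonneg z) (by norm_num)]
    norm_num
  calc |z * Kfun z| ≤ |z| * (2 * (|z| ^ (-(1 / 2) : ℝ) * Real.exp (-(1 / 2) * |z|))) := by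
        rw [abs_mul]
        gcongr
        exact abs_Kfun_le z
    _ = 2 * (|z| ^ (1 / 2 : ℝ) * Real.exp (-(1 / 2) * |z|)) := by rw [← hrpow]; ring

theorem abs_mul_deriv_Kfun_le (z : ℝ) : |z * deriv Kfun z| ≤ 2 * Real.exp (-|z|) := by
  rcases eq_or_ne z 0 with rfl | hz
  · simp
  have hr : 0 < |z| := abs_pos.2 hz
  calc |z * deriv Kfun z| = |z| * (2 / Real.sinh (2 * |z|)) := by
        simp [deriv_Kfun hz, abs_mul, abs_div, Real.abs_sinh]
    _ ≤ |z| * (2 / (|z| * Real.exp |z|)) := by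
        gcongr
        exact mul_exp_le_sinh_two_mul hr.le
    _ = 2 * Real.exp (-|z|) := by rw [Real.exp_neg]; field_simp

theorem abs_sq_mul_deriv_deriv_Kfun_le (z : ℝ) :
    |z ^ 2 * deriv (deriv Kfun) z| ≤ 8 * Real.exp (-|z|) := by
  rcases eq_or_ne z 0 with rfl | hz
  · simp
  have hr : 0 < |z| := abs_pos.2 hz
  have hsinh : |z| / 2 * Real.exp (|z| / 2) ≤ Real.sinh |z| := by
    simpa [mul_div_cancel₀] using mul_exp_le_sinh_two_mul (half_pos hr).le
  have hcosh : Real.cosh (2 * |z|) ≤ 2 * Real.cosh |z| ^ 2 := by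
    rw [Real.cosh_two_mul]
    linarith [Real.cosh_sq |z|]
  have hsinh_ne : Real.sinh |z| ≠ 0 := Real.sinh_ne_zero.2 hr.ne'
  have hcosh_ne : Real.cosh |z| ≠ 0 := (Real.cosh_pos _).ne'
  calc |z ^ 2 * deriv (deriv Kfun) z|
      = |z| ^ 2 * (4 * Real.cosh (2 * |z|) / Real.sinh (2 * |z|) ^ 2) := by
        have hdouble : 2 * |z| = |2 * z| := by rw [abs_mul, abs_two]
        rw [(hasDerivAt_deriv_Kfun hz).deriv, hdouble, ← Real.abs_sinh, Real.cosh_abs, sq_abs,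
          sq_abs, abs_of_nonneg (by positivity)]
    _ ≤ |z| ^ 2 * (4 * (2 * Real.cosh |z| ^ 2) / Real.sinh (2 * |z|) ^ 2) := by gcongr
    _ = |z| ^ 2 * (2 / Real.sinh |z| ^ 2) := by
        rw [Real.sinh_two_mul]
        field_simp [hsinh_ne, hcosh_ne]
        ring
    _ ≤ |z| ^ 2 * (2 / (|z| / 2 * Real.exp (|z| / 2)) ^ 2) := by gcongr
    _ = 8 * Real.exp (-|z|) := by
        rw [Real.exp_neg, mul_pow, ← Real.exp_nat_mul, Nat.cast_ofNat,
          mul_div_cancel₀ _ two_ne_zero]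
        field_simp
        norm_num

theorem measurable_Kfun : Measurable Kfun := by
  have htanh : Measurable Real.tanh := by
    simpa only [Pi.div_def, ← Real.tanh_eq_sinh_div_cosh] using
      Real.measurable_sinh.div Real.measurable_cosh
  exact (Real.measurable_log.comp htanh.abs).neg

theorem isSingularPotential_Kfun : IsSingularPotential Kfun where
  differentiableAt z hz := (hasDerivAt_Kfun hz).differentiableAt
  differentiableAt_deriv z hz := (hasDerivAt_deriv_Kfun hz).differentiableAt
  integrable :=
    ((integrable_abs_rpow_mul_exp_neg_mul_abs (by norm_num) (by norm_num)).const_mul 2).mono'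
      measurable_Kfun.aestronglyMeasurable (ae_of_all _ abs_Kfun_le)
  integrable_mul :=
    ((integrable_abs_rpow_mul_exp_neg_mul_abs (by norm_num) (by norm_num)).const_mul 2).mono'
      (measurable_id.mul measurable_Kfun).aestronglyMeasurable (ae_of_all _ abs_mul_Kfun_le)
  integrable_mul_deriv :=
    ((integrable_comp_abs (integrableOn_exp_neg_Ioi 0)).const_mul 2).mono'
      (measurable_id.mul (measurable_deriv _)).aestronglyMeasurable
      (ae_of_all _ abs_mul_deriv_Kfun_le)
  integrable_sq_mul_deriv_deriv :=
    ((integrable_comp_abs (integrableOn_exp_neg_Ioi 0)).const_mul 8).mono'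
      ((measurable_id.pow_const 2).mul (measurable_deriv _)).aestronglyMeasurable
      (ae_of_all _ abs_sq_mul_deriv_deriv_Kfun_le)
  continuousAt_mul := by
    have hbound : Continuous fun z : ℝ => 2 * (|z| ^ (1 / 2 : ℝ) * Real.exp (-(1 / 2) * |z|)) := by
      fun_prop (disch := norm_num)
    simpa [ContinuousAt] using squeeze_zero_norm abs_mul_Kfun_le (by simpa using hbound.tendsto 0)
  continuousAt_sq_mul_deriv := by
    have hle : ∀ z, ‖z ^ 2 * deriv Kfun z‖ ≤ |z| * (2 * Real.exp (-|z|)) := fun z => by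
      rw [pow_two, mul_assoc, norm_mul]
      exact mul_le_mul_of_nonneg_left (abs_mul_deriv_Kfun_le z) (abs_nonneg z)
    have hbound : Continuous fun z : ℝ => |z| * (2 * Real.exp (-|z|)) := by fun_prop
    simpa [ContinuousAt] using squeeze_zero_norm hle (by simpa using hbound.tendsto 0)

end Kfun

theorem stmt18_general {E : Type*} [NormedAddCommGroup E] [NormedSpace ℝ E] [CompleteSpace E]
    {k : ℝ → ℝ} (hk : IsSingularPotential k) (hk_even : k.Even) {f : ℝ → E}
    (hf : Differentiable ℝ f) (hf' : LocallyLipschitz (deriv f))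
    (hfb' : ∃ M, ∀ x, ‖deriv f x‖ ≤ M) (x : ℝ) :
    DifferentiableAt ℝ (fun t => ∫ z, k (t - z) • f z) x ∧
      DifferentiableAt ℝ (deriv fun t => ∫ z, k (t - z) • f z) x ∧
      Integrable (fun z => deriv (deriv k) z • (f (x + z) - f x - z • deriv f x)) ∧
      deriv (deriv fun t => ∫ z, k (t - z) • f z) x =
        ∫ z, deriv (deriv k) z • (f (x + z) - f x - z • deriv f x) := by
  obtain ⟨M, hM⟩ := hfb'
  have hLip : LipschitzWith M.toNNReal f :=
    lipschitzWith_of_nnnorm_deriv_le hf fun y => by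
      simpa only [norm_toNNReal] using Real.toNNReal_mono (hM y)
  obtain ⟨C, hC⟩ := exists_eventually_dist_le_mul_dist hf'
    (isBounded_iff_forall_norm_le.2 ⟨M, forall_mem_range.2 hM⟩) x
  replace hC : ∀ᶠ t in 𝓝 x, ∀ z, ‖deriv f (t + z) - deriv f t‖ ≤ C * ‖z‖ :=
    hC.mono fun t ht z => by simpa [dist_eq_norm] using ht (t + z)
  simp only [integral_comp_sub_left_smul_of_even hk_even]
  have hfirst := hk.hasDerivAt_integral_smul hf hLip
  have hsecond : HasDerivAt (deriv fun t => ∫ z, k z • f (t + z))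
      (∫ z, deriv (deriv k) z • (f (x + z) - f x - z • deriv f x)) x := by
    rw [funext fun t => (hfirst t).deriv.trans (hk.integral_smul_deriv hf hLip t),
      ← neg_eq_iff_eq_neg.2 (hk.integral_deriv_smul_deriv_sub hf hLip hC)]
    exact (hk.hasDerivAt_integral_deriv_smul_sub hf hLip hC).fun_neg
  exact ⟨(hfirst x).differentiableAt, hsecond.differentiableAt,
    hk.integrable_deriv_deriv_smul_remainder hf hC.self_of_nhds, hsecond.deriv⟩

theorem stmt18 (f : ℝ → ℝ) (hf : ContDiff ℝ 2 f)
    (hfb : ∃ M, ∀ x, |f x| ≤ M) (hfb' : ∃ M, ∀ x, |deriv f x| ≤ M)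
    (hfi : Integrable f) :
    ∀ x : ℝ,
      DifferentiableAt ℝ (fun t => ∫ z : ℝ, Kfun (t - z) * f z) x ∧
      DifferentiableAt ℝ (deriv (fun t => ∫ z : ℝ, Kfun (t - z) * f z)) x ∧
      deriv (deriv (fun t => ∫ z : ℝ, Kfun (t - z) * f z)) x =
        ∫ z : ℝ, (f (x + z) - f x - z * deriv f x) * deriv (deriv Kfun) z := fun x => by
  obtain ⟨h₁, h₂, -, h₃⟩ := stmt18_general isSingularPotential_Kfun even_Kfun
    (hf.differentiable two_ne_zero) (hf.deriv' (n := 1)).locallyLipschitz hfb' x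
  exact ⟨h₁, h₂, h₃.trans (by simp only [smul_eq_mul, mul_comm])⟩
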